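/- arXiv:math/0512084 — 7 statements merged into one kernel-verified Lean document; each statement's English description precedes it below -/
import Mathlib

section
/- Given a vielbein, the associated structure matrices (J^a)_X{}^Y = -i Σ_{i,j,A} (σ^a)_i{}^j f_X^{iA} f^Y_{jA} (a = 1,2,3) have real entries and satisfy Σ_Y (J^a)_X{}^Y (J^b)_Y{}^Z = -δ^{ab} δ_X^Z + Σ_c ε^{abc} (J^c)_X{}^Z for all a,b; in other words, they define a quaternionic triple on ℝ^{4r}. -/
noncomputable section

/-- The totally antisymmetric Levi-Civita symbol on `Fin 3`, with `eps3 0 1 2 = 1`. -/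
def eps3 (a b c : Fin 3) : ℝ :=
  (((b.val : ℝ) - (a.val : ℝ)) * ((c.val : ℝ) - (b.val : ℝ)) * ((c.val : ℝ) - (a.val : ℝ))) / 2

/-- The standard Pauli matrices `σ^1, σ^2, σ^3`. -/
def pauli : Fin 3 → Matrix (Fin 2) (Fin 2) ℂ :=
  ![!![0, 1; 1, 0], !![0, -Complex.I; Complex.I, 0], !![1, 0; 0, -1]]

/-- The 2×2 antisymmetric symbol, `eps2 0 1 = 1 = -eps2 1 0` (indices `1,2` are `0,1`). -/
def eps2 (i j : Fin 2) : ℂ := ((j.val : ℂ)) - ((i.val : ℂ))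

/-- A vielbein: mutually inverse complex arrays `f_X^{iA}`, `f^X_{iA}` satisfying the
reality conditions with respect to `ε` and the symplectic matrix `ρ` (with `ρ^{AB}` given
by `rho` and `ρ_{AB}` by `rhoLow`). -/
def IsVielbein {r : ℕ} (rho rhoLow : Fin (2*r) → Fin (2*r) → ℂ)
    (f fUp : Fin (4*r) → Fin 2 → Fin (2*r) → ℂ) : Prop :=
  (∀ A B, rho A B = - rho B A) ∧
  (∀ A B, rhoLow A B = starRingEnd ℂ (rho A B)) ∧
  (∀ A C, (∑ B, rho A B * rhoLow C B) = if A = C then 1 else 0) ∧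
  (∀ X Y, (∑ i, ∑ A, f X i A * fUp Y i A) = if X = Y then 1 else 0) ∧
  (∀ i A j B, (∑ X, f X i A * fUp X j B)
      = (if i = j then 1 else 0) * (if A = B then 1 else 0)) ∧
  (∀ X i A, starRingEnd ℂ (fUp X i A) = ∑ j, ∑ B, eps2 i j * rho A B * fUp X j B) ∧
  (∀ X i A, starRingEnd ℂ (f X i A) = ∑ j, ∑ B, eps2 i j * rhoLow A B * f X j B)

/-- The structure matrices `(J^a)_X{}^Y = -i Σ_{i,j,A} (σ^a)_i{}^j f_X^{iA} f^Y_{jA}`. -/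
def JmatF {r : ℕ} (f fUp : Fin (4*r) → Fin 2 → Fin (2*r) → ℂ) (a : Fin 3)
    (X Y : Fin (4*r)) : ℂ :=
  -Complex.I * ∑ i, ∑ j, ∑ A, pauli a i j * f X i A * fUp Y j A

/-! Use the vielbein as a change of frame: in it `J a` becomes `-i σ^a ⊗ 1`, and the matrices
`-i σ^a` are the imaginary quaternion units. The frame change is an algebra homomorphism, so it
carries the quaternion relations over. By the reality condition, complex conjugation multiplies the
frame by `εᵀ ⊗ ρᵀ` (`ρ` with lower indices); since `εᵀ` intertwines `-i σ^a` with its complex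
conjugate, this factor passes through `J a`, and `J a` is real. -/

section Frame

open scoped Kronecker

variable {R ι κ m : Type*} [CommSemiring R] [Fintype κ] [DecidableEq κ] [Fintype m]

theorem mul_kronecker_one_apply (F : Matrix ι (m × κ) R) (S : Matrix m m R) (X : ι) (j : m)
    (A : κ) : (F * (S ⊗ₖ (1 : Matrix κ κ R))) X (j, A) = ∑ i, F X (i, A) * S i j := by
  simp [Matrix.mul_apply, Matrix.one_apply, Fintype.sum_prod_type]

theorem frame_mul_frame [Fintype ι] [DecidableEq m] {F : Matrix ι (m × κ) R}
    {G : Matrix (m × κ) ι R} (hGF : G * F = 1) (S T : Matrix m m R) :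
    F * (S ⊗ₖ (1 : Matrix κ κ R)) * G * (F * (T ⊗ₖ (1 : Matrix κ κ R)) * G)
      = F * ((S * T) ⊗ₖ (1 : Matrix κ κ R)) * G := by
  calc F * (S ⊗ₖ (1 : Matrix κ κ R)) * G * (F * (T ⊗ₖ (1 : Matrix κ κ R)) * G)
      = F * (S ⊗ₖ (1 : Matrix κ κ R)) * (G * F) * (T ⊗ₖ (1 : Matrix κ κ R)) * G := by
        simp only [Matrix.mul_assoc]
    _ = F * ((S * T) ⊗ₖ (1 * 1 : Matrix κ κ R)) * G := by
        rw [hGF, Matrix.mul_one, Matrix.mul_kronecker_mul, Matrix.mul_assoc F]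
    _ = F * ((S * T) ⊗ₖ (1 : Matrix κ κ R)) * G := by rw [Matrix.one_mul]

variable [Fintype ι] [DecidableEq ι] [DecidableEq m] {F : Matrix ι (m × κ) R}
  {G : Matrix (m × κ) ι R}

/-- For mutually inverse `F` and `G`, viewed as a change of frame, the algebra homomorphism
`S ↦ F (S ⊗ 1) G` that lets matrices on the first tensor factor act in the index `ι`. -/
def frameAlgHom (hFG : F * G = 1) (hGF : G * F = 1) : Matrix m m R →ₐ[R] Matrix ι ι R :=
  AlgHom.ofLinearMap
    { toFun := fun S => F * (S ⊗ₖ (1 : Matrix κ κ R)) * G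
      map_add' := fun S T => by rw [Matrix.add_kronecker, Matrix.mul_add, Matrix.add_mul]
      map_smul' := fun c S => by
        rw [Matrix.smul_kronecker, Matrix.mul_smul, Matrix.smul_mul, RingHom.id_apply] }
    (by simp only [LinearMap.coe_mk, AddHom.coe_mk, Matrix.one_kronecker_one, Matrix.mul_one, hFG])
    (fun S T => (frame_mul_frame hGF S T).symm)

theorem frameAlgHom_apply (hFG : F * G = 1) (hGF : G * F = 1) (S : Matrix m m R) :
    frameAlgHom hFG hGF S = F * (S ⊗ₖ (1 : Matrix κ κ R)) * G :=
  rfl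

theorem frameAlgHom_map_eq_of_mul_eq (hFG : F * G = 1) (hGF : G * F = 1) {φ : R →+* R}
    {E S T : Matrix m m R} {P : Matrix κ κ R} (hF : F.map φ = F * (E ⊗ₖ P))
    (hS : E * S.map φ = T * E) :
    (frameAlgHom hFG hGF S).map φ = frameAlgHom hFG hGF T := by
  -- `G.map φ` enters only as the right inverse of `F.map φ`, so no formula for it is needed.
  have hφ : F.map φ * G.map φ = 1 := by
    rw [← Matrix.map_mul, hFG, Matrix.map_one φ (map_zero φ) (map_one φ)]
  have hmap : (S ⊗ₖ (1 : Matrix κ κ R)).map φ = S.map φ ⊗ₖ (1 : Matrix κ κ R) := by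
    ext ⟨i, A⟩ ⟨j, B⟩
    simp [Matrix.one_apply, apply_ite φ]
  have hcomm : (E ⊗ₖ P) * (S.map φ ⊗ₖ (1 : Matrix κ κ R))
      = (T ⊗ₖ (1 : Matrix κ κ R)) * (E ⊗ₖ P) := by
    rw [← Matrix.mul_kronecker_mul, ← Matrix.mul_kronecker_mul, hS, Matrix.mul_one, Matrix.one_mul]
  simp only [frameAlgHom_apply]
  calc (F * (S ⊗ₖ (1 : Matrix κ κ R)) * G).map φ
      = F * ((E ⊗ₖ P) * (S.map φ ⊗ₖ (1 : Matrix κ κ R))) * G.map φ := by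
        rw [Matrix.map_mul, Matrix.map_mul, hmap, hF, Matrix.mul_assoc F]
    _ = F * (T ⊗ₖ (1 : Matrix κ κ R)) * (G * F) * (E ⊗ₖ P) * G.map φ := by
        rw [hcomm, hGF, Matrix.mul_one, ← Matrix.mul_assoc F]
    _ = F * (T ⊗ₖ (1 : Matrix κ κ R)) * G * (F.map φ * G.map φ) := by
        rw [hF]; simp only [Matrix.mul_assoc]
    _ = F * (T ⊗ₖ (1 : Matrix κ κ R)) * G := by rw [hφ, Matrix.mul_one]

end Frame

section QuaternionicTriple

variable {A B : Type*} [Ring A] [Algebra ℝ A] [Ring B] [Algebra ℝ B]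

/-- A quaternionic triple in a real algebra: `J a * J b = -δ^{ab} + ∑ c, ε^{abc} J c`. For the
algebra of endomorphisms of `V` these are the quaternionic triples on `V`. -/
def IsQuaternionicTriple (J : Fin 3 → A) : Prop :=
  ∀ a b, J a * J b = -(if a = b then 1 else 0) + ∑ c, eps3 a b c • J c

theorem IsQuaternionicTriple.map {J : Fin 3 → A} (hJ : IsQuaternionicTriple J) (φ : A →ₐ[ℝ] B) :
    IsQuaternionicTriple fun a => φ (J a) := by
  intro a b
  rw [← map_mul, hJ a b]
  simp only [map_add, map_neg, apply_ite φ, map_one, map_zero, map_sum, map_smul]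

theorem isQuaternionicTriple_iff_apply {ι : Type*} [Fintype ι] [DecidableEq ι]
    {J : Fin 3 → Matrix ι ι ℂ} :
    IsQuaternionicTriple J ↔ ∀ a b X Z, ∑ Y, J a X Y * J b Y Z
      = -(if a = b then 1 else 0) * (if X = Z then 1 else 0)
        + ∑ c, (eps3 a b c : ℂ) * J c X Z := by
  refine forall₂_congr fun a b => ?_
  have hdelta (X Z : ι) : (-(if a = b then 1 else 0) : Matrix ι ι ℂ) X Z
      = -(if a = b then 1 else 0) * (if X = Z then 1 else 0) := by
    split_ifs <;> simp_all
  simp only [← Matrix.ext_iff, Matrix.mul_apply, Matrix.add_apply, hdelta, Matrix.sum_apply,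
    Matrix.smul_apply, Complex.real_smul]

end QuaternionicTriple

/-- The images `-i σ^a` of the imaginary quaternion units in the 2×2 complex matrices. -/
def quaternionUnit (a : Fin 3) : Matrix (Fin 2) (Fin 2) ℂ :=
  -Complex.I • pauli a

theorem isQuaternionicTriple_quaternionUnit : IsQuaternionicTriple quaternionUnit := by
  intro a b
  fin_cases a <;> fin_cases b <;> ext i j <;> fin_cases i <;> fin_cases j <;>
    simp [quaternionUnit, pauli, eps3, Matrix.mul_apply, Fin.sum_univ_three] <;> norm_num

open scoped Matrix in
theorem eps2_transpose_mul_conj_quaternionUnit (a : Fin 3) :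
    (Matrix.of eps2)ᵀ * (quaternionUnit a).map (starRingEnd ℂ)
      = quaternionUnit a * (Matrix.of eps2)ᵀ := by
  ext i j
  fin_cases a <;> fin_cases i <;> fin_cases j <;>
    simp [quaternionUnit, pauli, eps2, Matrix.mul_apply]

section Vielbein

open scoped Kronecker Matrix

variable {ι κ : Type*}

/-- The structure matrices `F (-i σ^a ⊗ 1) G` of a frame `F` with inverse `G`. -/
def structureMatrix [Fintype κ] [DecidableEq κ] (F : Matrix ι (Fin 2 × κ) ℂ)
    (G : Matrix (Fin 2 × κ) ι ℂ) (a : Fin 3) : Matrix ι ι ℂ :=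
  F * (quaternionUnit a ⊗ₖ (1 : Matrix κ κ ℂ)) * G

/-- A vielbein array as a matrix, with the pair `(i, A)` as a single column index. -/
def vielbeinMatrix (f : ι → Fin 2 → κ → ℂ) : Matrix ι (Fin 2 × κ) ℂ :=
  Matrix.of fun X p => f X p.1 p.2

theorem JmatF_eq_structureMatrix {r : ℕ} (f fUp : Fin (4 * r) → Fin 2 → Fin (2 * r) → ℂ)
    (a : Fin 3) : JmatF f fUp a = structureMatrix (vielbeinMatrix f) (vielbeinMatrix fUp)ᵀ a := by
  ext X Y
  rw [structureMatrix, Matrix.mul_apply, Fintype.sum_prod_type]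
  simp only [JmatF, mul_kronecker_one_apply, Finset.sum_mul, Finset.mul_sum]
  rw [Finset.sum_comm]
  refine Finset.sum_congr rfl fun j _ => ?_
  rw [Finset.sum_comm]
  refine Finset.sum_congr rfl fun A _ => Finset.sum_congr rfl fun i _ => ?_
  simp only [quaternionUnit, vielbeinMatrix, Matrix.of_apply, Matrix.transpose_apply,
    Matrix.smul_apply, smul_eq_mul]
  ring

namespace IsVielbein

variable {r : ℕ} {rho rhoLow : Fin (2 * r) → Fin (2 * r) → ℂ}
  {f fUp : Fin (4 * r) → Fin 2 → Fin (2 * r) → ℂ}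

theorem vielbeinMatrix_mul_transpose (h : IsVielbein rho rhoLow f fUp) :
    vielbeinMatrix f * (vielbeinMatrix fUp)ᵀ = 1 := by
  obtain ⟨-, -, -, hinv, -⟩ := h
  ext X Y
  simpa [vielbeinMatrix, Matrix.mul_apply, Matrix.one_apply, Fintype.sum_prod_type] using hinv X Y

theorem transpose_mul_vielbeinMatrix (h : IsVielbein rho rhoLow f fUp) :
    (vielbeinMatrix fUp)ᵀ * vielbeinMatrix f = 1 := by
  obtain ⟨-, -, -, -, hinv, -⟩ := h
  ext ⟨j, B⟩ ⟨i, A⟩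
  simp [vielbeinMatrix, Matrix.mul_apply, Matrix.one_apply, mul_comm (fUp _ _ _), hinv,
    ← ite_and, eq_comm, and_comm]

theorem vielbeinMatrix_map_conj (h : IsVielbein rho rhoLow f fUp) :
    (vielbeinMatrix f).map (starRingEnd ℂ)
      = vielbeinMatrix f * ((Matrix.of eps2)ᵀ ⊗ₖ (Matrix.of rhoLow)ᵀ) := by
  obtain ⟨-, -, -, -, -, -, hconj⟩ := h
  ext X ⟨i, A⟩
  simp [vielbeinMatrix, Matrix.mul_apply, Fintype.sum_prod_type, hconj, mul_comm]

end IsVielbein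

theorem stmt1_general [Fintype ι] [DecidableEq ι] [Fintype κ] [DecidableEq κ]
    {F : Matrix ι (Fin 2 × κ) ℂ} {G : Matrix (Fin 2 × κ) ι ℂ} {P : Matrix κ κ ℂ}
    (hFG : F * G = 1) (hGF : G * F = 1)
    (hF : F.map (starRingEnd ℂ) = F * ((Matrix.of eps2)ᵀ ⊗ₖ P)) :
    (∀ a X Y, (structureMatrix F G a X Y).im = 0) ∧
      IsQuaternionicTriple (structureMatrix F G) := by
  refine ⟨fun a X Y => Complex.conj_eq_iff_im.mp ?_,
    isQuaternionicTriple_quaternionUnit.map ((frameAlgHom hFG hGF).restrictScalars ℝ)⟩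
  exact congr_fun₂
    (frameAlgHom_map_eq_of_mul_eq hFG hGF hF (eps2_transpose_mul_conj_quaternionUnit a)) X Y

end Vielbein

/-- the structure matrices of a vielbein have real entries and satisfy the
quaternion algebra `J^a J^b = -δ^{ab} 𝟙 + Σ_c ε^{abc} J^c`, i.e. they define a
quaternionic triple on `ℝ^{4r}`. -/
theorem stmt1 {r : ℕ} (hr : 1 ≤ r)
    (rho rhoLow : Fin (2*r) → Fin (2*r) → ℂ)
    (f fUp : Fin (4*r) → Fin 2 → Fin (2*r) → ℂ)
    (hviel : IsVielbein rho rhoLow f fUp) :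
    (∀ (a : Fin 3) (X Y : Fin (4*r)), (JmatF f fUp a X Y).im = 0) ∧
    (∀ (a b : Fin 3) (X Z : Fin (4*r)),
      (∑ Y, JmatF f fUp a X Y * JmatF f fUp b Y Z)
        = -(if a = b then 1 else 0) * (if X = Z then 1 else 0)
          + ∑ c, (eps3 a b c : ℂ) * JmatF f fUp c X Z) := by
  simpa only [JmatF_eq_structureMatrix, ← isQuaternionicTriple_iff_apply] using
    stmt1_general hviel.vielbeinMatrix_mul_transpose hviel.transpose_mul_vielbeinMatrix
      hviel.vielbeinMatrix_map_conj
end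
end

section
/- Fix a vielbein with associated structure matrices J^a and matrices L(A,B)_W{}^Z = Σ_i f^Z_{iA} f_W^{iB}. Let R_{XYW}{}^Z be a complex array (X,Y,W,Z ∈ {1,...,4r}) that is antisymmetric in (X,Y), satisfies the first Bianchi identity R_{XYW}{}^Z + R_{YWX}{}^Z + R_{WXY}{}^Z = 0, and admits a decomposition R_{XYW}{}^Z = -Σ_a 𝓑^a_{XY} (J^a)_W{}^Z + Σ_{A,B} 𝓒_{XYB}{}^A L(A,B)_W{}^Z for some arrays 𝓑^a_{XY} and 𝓒_{XYB}{}^A. Then the Ricci tensor Ric_{XY} := Σ_Z R_{ZXY}{}^Z has antisymmetric part (Ric_{XY} - Ric_{YX})/2 = -Σ_A 𝓒_{XYA}{}^A; in particular, if the symmetric array Ric is symmetric then Σ_A 𝓒_{XYA}{}^A = 0. -/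
noncomputable section

/-- The matrices `L(A,B)_W{}^Z = Σ_i f^Z_{iA} f_W^{iB}`. -/
def LmatF {r : ℕ} (f fUp : Fin (4*r) → Fin 2 → Fin (2*r) → ℂ)
    (A B : Fin (2*r)) (W Z : Fin (4*r)) : ℂ :=
  ∑ i, fUp Z i A * f W i B

/-! Tracing the Bianchi identity gives `Ric_{XY} - Ric_{YX} = -tr R_{XY}`. The vielbein identifies
`ℂ^{4r}` with `ℂ² ⊗ ℂ^{2r}`, and under this identification `R_{XY}` becomes `S ⊗ 1 + 1 ⊗ 𝓒_{XY}`,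
where `S` is a combination of Pauli matrices. Since `tr S = 0`, the trace of `R_{XY}` is
`2 tr 𝓒_{XY}`. -/

open Matrix
open scoped Kronecker

section Kronecker

variable {K : Type*}

theorem sum_kronecker {κ l m n p : Type*} [NonUnitalNonAssocSemiring K] (s : Finset κ)
    (S : κ → Matrix l m K) (T : Matrix n p K) : (∑ a ∈ s, S a) ⊗ₖ T = ∑ a ∈ s, S a ⊗ₖ T := by
  ext
  simp [Matrix.sum_apply, Finset.sum_mul]

theorem trace_mul_mul_of_mul_eq_one {ι m : Type*} [Fintype ι] [Fintype m] [DecidableEq m]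
    [CommSemiring K] {F : Matrix ι m K} {G : Matrix m ι K} (hGF : G * F = 1) (P : Matrix m m K) :
    trace (F * P * G) = trace P := by
  rw [trace_mul_cycle, hGF, one_mul]

theorem trace_kronecker_one_add_one_kronecker {n α : Type*} [Fintype n] [Fintype α] [DecidableEq n]
    [DecidableEq α] [Semiring K] (S : Matrix n n K) (T : Matrix α α K) :
    trace (S ⊗ₖ (1 : Matrix α α K) + (1 : Matrix n n K) ⊗ₖ T) =
      Fintype.card α * trace S + Fintype.card n * trace T := by
  rw [trace_add, trace_kronecker, trace_kronecker, trace_one, trace_one, Nat.cast_comm _ (trace S)]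

end Kronecker

section Ricci

variable {ι M : Type*} [Fintype ι]

/-- The Ricci tensor `Ric_{XY} = Σ_Z R_{ZXY}{}^Z`: the contraction of the first and last indices of
a curvature array, whose upper index is its last argument. -/
def ricci [AddCommMonoid M] (R : ι → ι → ι → ι → M) (X Y : ι) : M :=
  ∑ Z, R Z X Y Z

theorem ricci_sub_ricci_swap [AddCommGroup M] {R : ι → ι → ι → ι → M}
    (hanti : ∀ X Y W Z, R X Y W Z = -R Y X W Z)
    (hbianchi : ∀ X Y W Z, R X Y W Z + R Y W X Z + R W X Y Z = 0) (X Y : ι) :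
    ricci R X Y - ricci R Y X = -trace (of (R X Y)) := by
  simp only [ricci, trace, diag_apply, of_apply]
  rw [← Finset.sum_sub_distrib, ← Finset.sum_neg_distrib]
  refine Finset.sum_congr rfl fun Z _ => ?_
  rw [hanti Z Y X Z, sub_neg_eq_add, eq_neg_iff_add_eq_zero, add_right_comm]
  exact hbianchi Z X Y Z

end Ricci

section Frame

variable {ι n α K : Type*}

/-- The array `f_X^{iA}` as a matrix with row index `X` and column index the pair `(i, A)`, so that
contractions over frame indices become matrix products. For `f^X_{iA}` the transpose is used. -/
def frameMatrix (f : ι → n → α → K) : Matrix ι (n × α) K :=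
  of fun X p => f X p.1 p.2

variable [Fintype n] [Fintype α]

theorem frameMatrix_mul_kronecker_mul_transpose_apply [CommSemiring K] (f g : ι → n → α → K)
    (S : Matrix n n K) (T : Matrix α α K) (W Z : ι) :
    (frameMatrix f * (S ⊗ₖ T) * (frameMatrix g)ᵀ) W Z =
      ∑ i, ∑ j, ∑ A, ∑ B, S i j * T A B * f W i A * g Z j B := by
  simp only [mul_apply, Fintype.sum_prod_type, frameMatrix, transpose_apply, of_apply,
    kroneckerMap_apply, Finset.sum_mul]
  calc
    ∑ j, ∑ B, ∑ i, ∑ A, f W i A * (S i j * T A B) * g Z j B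
      = ∑ j, ∑ i, ∑ A, ∑ B, f W i A * (S i j * T A B) * g Z j B :=
        Finset.sum_congr rfl fun j _ => by
          rw [Finset.sum_comm]
          exact Finset.sum_congr rfl fun i _ => Finset.sum_comm
    _ = ∑ i, ∑ j, ∑ A, ∑ B, S i j * T A B * f W i A * g Z j B := by
        rw [Finset.sum_comm]
        simp only [mul_comm (f W _ _)]

theorem stmt5_general [DecidableEq n] [DecidableEq α] [Fintype ι] [Field K]
    (hn : (Fintype.card n : K) ≠ 0)
    {F : Matrix ι (n × α) K} {G : Matrix (n × α) ι K} (hGF : G * F = 1)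
    {R : ι → ι → ι → ι → K}
    (hanti : ∀ X Y W Z, R X Y W Z = -R Y X W Z)
    (hbianchi : ∀ X Y W Z, R X Y W Z + R Y W X Z + R W X Y Z = 0)
    {S : ι → ι → Matrix n n K} (hS : ∀ X Y, trace (S X Y) = 0) {C : ι → ι → Matrix α α K}
    (hdecomp : ∀ X Y, of (R X Y) = F * (S X Y ⊗ₖ 1 + 1 ⊗ₖ C X Y) * G) :
    (∀ X Y, (ricci R X Y - ricci R Y X) / Fintype.card n = -trace (C X Y)) ∧
      ((∀ X Y, ricci R X Y = ricci R Y X) → ∀ X Y, trace (C X Y) = 0) := by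
  have trace_curvature (X Y : ι) : trace (of (R X Y)) = Fintype.card n * trace (C X Y) := by
    rw [hdecomp, trace_mul_mul_of_mul_eq_one hGF, trace_kronecker_one_add_one_kronecker, hS,
      mul_zero, zero_add]
  have antisymm_part (X Y : ι) :
      (ricci R X Y - ricci R Y X) / Fintype.card n = -trace (C X Y) := by
    rw [ricci_sub_ricci_swap hanti hbianchi, trace_curvature, neg_div, mul_div_cancel_left₀ _ hn]
  refine ⟨antisymm_part, fun hsymm X Y => ?_⟩
  rw [← neg_eq_zero, ← antisymm_part, hsymm, sub_self, zero_div]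

end Frame

section Vielbein

theorem trace_pauli (a : Fin 3) : trace (pauli a) = 0 := by
  fin_cases a <;> simp [pauli, trace_fin_two]

variable {r : ℕ}

theorem IsVielbein.transpose_frameMatrix_mul_frameMatrix
    {rho rhoLow : Fin (2 * r) → Fin (2 * r) → ℂ} {f fUp : Fin (4 * r) → Fin 2 → Fin (2 * r) → ℂ}
    (h : IsVielbein rho rhoLow f fUp) : (frameMatrix fUp)ᵀ * frameMatrix f = 1 := by
  obtain ⟨-, -, -, -, hdual, -, -⟩ := h
  ext ⟨j, B⟩ ⟨i, A⟩
  simpa [frameMatrix, mul_apply, one_apply, Prod.ext_iff, ← ite_and, and_comm, mul_comm,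
    eq_comm] using hdual i A j B

variable (f fUp : Fin (4 * r) → Fin 2 → Fin (2 * r) → ℂ)

theorem of_JmatF_eq_mul_kronecker_one_mul (a : Fin 3) :
    of (JmatF f fUp a) =
      frameMatrix f * ((-Complex.I • pauli a) ⊗ₖ (1 : Matrix (Fin (2 * r)) (Fin (2 * r)) ℂ)) *
        (frameMatrix fUp)ᵀ := by
  ext W Z
  rw [frameMatrix_mul_kronecker_mul_transpose_apply]
  simp [JmatF, one_apply, Finset.mul_sum, mul_assoc, -Fin.sum_univ_two, -Finset.sum_neg_distrib]

theorem of_sum_LmatF_eq_mul_one_kronecker_mul (C : Fin (2 * r) → Fin (2 * r) → ℂ) :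
    of (fun W Z => ∑ A, ∑ B, C B A * LmatF f fUp A B W Z) =
      frameMatrix f * ((1 : Matrix (Fin 2) (Fin 2) ℂ) ⊗ₖ of C) * (frameMatrix fUp)ᵀ := by
  ext W Z
  rw [frameMatrix_mul_kronecker_mul_transpose_apply]
  calc
    ∑ A, ∑ B, C B A * LmatF f fUp A B W Z
      = ∑ B, ∑ A, ∑ i, C B A * f W i B * fUp Z i A := by
        rw [Finset.sum_comm]
        simp only [LmatF, Finset.mul_sum, mul_assoc, mul_comm (fUp Z _ _)]
    _ = ∑ i, ∑ B, ∑ A, C B A * f W i B * fUp Z i A := by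
        rw [Finset.sum_comm_cycle]
    _ = _ := by simp [one_apply]

/-- The (complexified) `SU(2)` part `-Σ_a b_a (-i σ^a)` of a curvature with coefficients
`b_a = 𝓑^a_{XY}`, as an endomorphism of the factor `ℂ²` of `ℂ² ⊗ ℂ^{2r}`. -/
def su2Part (b : Fin 3 → ℂ) : Matrix (Fin 2) (Fin 2) ℂ :=
  ∑ a, -b a • -Complex.I • pauli a

theorem trace_su2Part (b : Fin 3 → ℂ) : trace (su2Part b) = 0 := by
  simp [su2Part, trace_sum, trace_pauli]

theorem of_neg_sum_JmatF_add_sum_LmatF_eq (b : Fin 3 → ℂ)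
    (C : Fin (2 * r) → Fin (2 * r) → ℂ) :
    of (fun W Z => -(∑ a, b a * JmatF f fUp a W Z)
        + ∑ A, ∑ B, C B A * LmatF f fUp A B W Z) =
      frameMatrix f * (su2Part b ⊗ₖ 1 + 1 ⊗ₖ of C) * (frameMatrix fUp)ᵀ := by
  rw [Matrix.mul_add, Matrix.add_mul, ← of_sum_LmatF_eq_mul_one_kronecker_mul, su2Part]
  simp only [sum_kronecker, smul_kronecker (-b _), Matrix.mul_sum, Matrix.sum_mul, Matrix.mul_smul,
    Matrix.smul_mul, ← of_JmatF_eq_mul_kronecker_one_mul]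
  ext W Z
  simp [Matrix.sum_apply]

end Vielbein

/-- for a curvature-like array `R` admitting an `SU(2) ⊕ GL(r,ℍ)`
decomposition through the vielbein, the antisymmetric part of the Ricci tensor
`Ric_{XY} = Σ_Z R_{ZXY}{}^Z` is `-Σ_A 𝓒_{XYA}{}^A`; in particular, if `Ric` is symmetric
then `Σ_A 𝓒_{XYA}{}^A = 0`. -/
theorem stmt5 {r : ℕ} (hr : 1 ≤ r)
    (rho rhoLow : Fin (2*r) → Fin (2*r) → ℂ)
    (f fUp : Fin (4*r) → Fin 2 → Fin (2*r) → ℂ)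
    (hviel : IsVielbein rho rhoLow f fUp)
    (R : Fin (4*r) → Fin (4*r) → Fin (4*r) → Fin (4*r) → ℂ)
    (Bc : Fin 3 → Fin (4*r) → Fin (4*r) → ℂ)
    (Cc : Fin (4*r) → Fin (4*r) → Fin (2*r) → Fin (2*r) → ℂ)
    (hanti : ∀ X Y W Z, R X Y W Z = - R Y X W Z)
    (hbianchi : ∀ X Y W Z, R X Y W Z + R Y W X Z + R W X Y Z = 0)
    (hdecomp : ∀ X Y W Z, R X Y W Z
      = -(∑ a, Bc a X Y * JmatF f fUp a W Z)
        + ∑ A, ∑ B, Cc X Y B A * LmatF f fUp A B W Z) :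
    (∀ X Y, ((∑ Z, R Z X Y Z) - (∑ Z, R Z Y X Z)) / 2 = -∑ A, Cc X Y A A) ∧
    ((∀ X Y, (∑ Z, R Z X Y Z) = ∑ Z, R Z Y X Z) →
      ∀ X Y, (∑ A, Cc X Y A A) = 0) := by
  simpa [ricci, trace] using
    stmt5_general (by simp) hviel.transpose_frameMatrix_mul_frameMatrix hanti hbianchi
      (fun X Y => trace_su2Part (Bc · X Y))
      fun X Y => (congrArg of (funext₂ (hdecomp X Y))).trans
        (of_neg_sum_JmatF_add_sum_LmatF_eq f fUp (Bc · X Y) (Cc X Y))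
end
end

section
/- (Uniqueness of the torsionless hypercomplex connection.) Let V be a real vector space with a quaternionic triple (J^1,J^2,J^3). If S : V × V → V is a symmetric bilinear map satisfying S(X, J^a Y) = J^a S(X,Y) for all a ∈ {1,2,3} and all X,Y ∈ V, then S = 0. Consequently, if U is an open subset of a finite-dimensional real vector space E, J : U → End(E)^3 is a smooth field of quaternionic triples, and Γ, Γ' are two torsionless connection coefficient fields on U with (∇_X J^a)_p = 0 and (∇'_X J^a)_p = 0 for all a, p, X, then Γ = Γ'. -/
noncomputable section

/-- A quaternionic triple on a real vector space `V`:
`J^a ∘ J^b = -δ^{ab} id_V + Σ_c ε^{abc} J^c`. -/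
def IsQuatTriple {V : Type*} [AddCommGroup V] [Module ℝ V]
    (J : Fin 3 → Module.End ℝ V) : Prop :=
  ∀ a b, J a * J b = -(if a = b then (1 : Module.End ℝ V) else 0) + ∑ c, eps3 a b c • J c

/-- A quaternionic triple of continuous linear endomorphisms:
`J^a ∘ J^b = -δ^{ab} id + Σ_c ε^{abc} J^c`. -/
def IsQuatTripleCLM {E : Type*} [NormedAddCommGroup E] [NormedSpace ℝ E]
    (J : Fin 3 → E →L[ℝ] E) : Prop :=
  ∀ a b, (J a).comp (J b)
    = -(if a = b then (1 : E →L[ℝ] E) else 0) + ∑ c, eps3 a b c • J c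

/-!
Let `S` be symmetric and commute with `J^a` and `J^b` in its second slot, hence also in its first,
where `a ≠ b`. Evaluating `S (J^a X) (J^b Y)` one slot at a time, in either order, gives
`J^a (J^b (S X Y)) = J^b (J^a (S X Y))`. Since `J^a` and `J^b` anticommute and are injective,
`S X Y = 0`.

If two connections agree on the covariant derivatives of each `J^a`, the derivative terms cancel, so
the difference of the connections commutes with each `J^a`. When both are torsionless this
difference is symmetric, hence zero by the argument above.
-/

theorem eps3_self_left (a c : Fin 3) : eps3 a a c = 0 := by
  simp [eps3]

theorem eps3_swap (a b c : Fin 3) : eps3 b a c = -eps3 a b c := by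
  unfold eps3
  ring

theorem map_map_comm_of_symm {α β : Type*} {S : α → α → β} (hS : ∀ x y, S x y = S y x)
    {f g : α → α} {f' g' : β → β} (hf : ∀ x y, S x (f y) = f' (S x y))
    (hg : ∀ x y, S x (g y) = g' (S x y)) (x y : α) :
    f' (g' (S x y)) = g' (f' (S x y)) := by
  have hf_left (x y : α) : S (f x) y = f' (S x y) := by rw [hS, hf, hS]
  calc f' (g' (S x y)) = S (f x) (g y) := by rw [hf_left, hg]
    _ = g' (f' (S x y)) := by rw [hg, hf_left]

namespace IsQuatTriple

variable {V : Type*} [AddCommGroup V] [Module ℝ V] {J : Fin 3 → Module.End ℝ V}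

theorem mul_self (hJ : IsQuatTriple J) (a : Fin 3) : J a * J a = -1 := by
  simp [hJ a a, eps3_self_left]

theorem mul_eq_neg_mul (hJ : IsQuatTriple J) {a b : Fin 3} (hab : a ≠ b) :
    J a * J b = -(J b * J a) := by
  simp [hJ a b, hJ b a, hab, hab.symm, eps3_swap a b]

theorem injective (hJ : IsQuatTriple J) (a : Fin 3) : Function.Injective (J a) := by
  have hleft : Function.LeftInverse (fun v => -J a v) (J a) := fun v => by
    simpa using congrArg Neg.neg (LinearMap.congr_fun (hJ.mul_self a) v)
  exact hleft.injective

theorem eq_zero_of_apply_comm (hJ : IsQuatTriple J) {a b : Fin 3} (hab : a ≠ b) {v : V}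
    (hv : J a (J b v) = J b (J a v)) : v = 0 := by
  have hneg : J a (J b v) = -J b (J a v) := LinearMap.congr_fun (hJ.mul_eq_neg_mul hab) v
  have : IsAddTorsionFree V := .of_isTorsionFree ℝ V
  have hzero : J b (J a v) = 0 := self_eq_neg.mp (hv.symm.trans hneg)
  rwa [map_eq_zero_iff _ (hJ.injective b), map_eq_zero_iff _ (hJ.injective a)] at hzero

theorem apply_eq_zero_of_symm (hJ : IsQuatTriple J) {a b : Fin 3} (hab : a ≠ b) {α : Type*}
    {S : α → α → V} (hS : ∀ x y, S x y = S y x) {f g : α → α}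
    (hf : ∀ x y, S x (f y) = J a (S x y)) (hg : ∀ x y, S x (g y) = J b (S x y)) (x y : α) :
    S x y = 0 :=
  hJ.eq_zero_of_apply_comm hab (map_map_comm_of_symm hS hf hg x y)

theorem bilinear_eq_zero_of_symm (hJ : IsQuatTriple J) {S : V →ₗ[ℝ] V →ₗ[ℝ] V}
    (hS : ∀ X Y, S X Y = S Y X) (hSJ : ∀ a X Y, S X (J a Y) = J a (S X Y)) : S = 0 :=
  LinearMap.ext₂ (hJ.apply_eq_zero_of_symm zero_ne_one hS (hSJ 0) (hSJ 1))

end IsQuatTriple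

section Connection

variable {E : Type*} [NormedAddCommGroup E] [NormedSpace ℝ E]

theorem IsQuatTripleCLM.isQuatTriple {J : Fin 3 → E →L[ℝ] E} (hJ : IsQuatTripleCLM J) :
    IsQuatTriple fun a => (J a : Module.End ℝ E) := by
  intro a b
  ext x
  have hx := DFunLike.congr_fun (hJ a b) x
  split_ifs at hx ⊢ <;> simpa using hx

/-- The covariant derivative `(∇_X J)_p = (DJ)_p(X) + Γ_p(X, ·) ∘ J_p - J_p ∘ Γ_p(X, ·)` of a field
`J` of endomorphisms, for the connection with coefficients `Γ`. It is meaningful only where `J` is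
differentiable: elsewhere `fderiv` is `0`. -/
def covariantDeriv (Γ : E → E →L[ℝ] E →L[ℝ] E) (J : E → E →L[ℝ] E) (p X : E) : E →L[ℝ] E :=
  fderiv ℝ J p X + (Γ p X).comp (J p) - (J p).comp (Γ p X)

theorem covariantDeriv_eq_iff_commute_sub {Γ Γ' : E → E →L[ℝ] E →L[ℝ] E} {J : E → E →L[ℝ] E}
    {p X : E} :
    covariantDeriv Γ J p X = covariantDeriv Γ' J p X ↔ Commute (Γ p X - Γ' p X) (J p) := by
  have hsub : covariantDeriv Γ J p X - covariantDeriv Γ' J p X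
      = (Γ p X - Γ' p X) * J p - J p * (Γ p X - Γ' p X) := by
    simp only [covariantDeriv, sub_mul, mul_sub, ContinuousLinearMap.mul_def]
    abel
  rw [← sub_eq_zero, hsub, sub_eq_zero, commute_iff_eq]

theorem IsQuatTripleCLM.eq_of_symm_of_commute_sub {J : Fin 3 → E →L[ℝ] E} (hJ : IsQuatTripleCLM J)
    {Γ Γ' : E →L[ℝ] E →L[ℝ] E} (hΓ : ∀ X Y, Γ X Y = Γ Y X) (hΓ' : ∀ X Y, Γ' X Y = Γ' Y X)
    (hcomm : ∀ a X, Commute (Γ X - Γ' X) (J a)) : Γ = Γ' := by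
  have hzero : (Γ - Γ').toLinearMap₁₂ = 0 :=
    hJ.isQuatTriple.bilinear_eq_zero_of_symm
      (fun X Y => by simp [hΓ X Y, hΓ' X Y])
      (fun a X Y => DFunLike.congr_fun (hcomm a X).eq Y)
  ext X Y
  simpa [sub_eq_zero] using LinearMap.congr_fun₂ hzero X Y

end Connection

theorem stmt6_general.{u, v} :
    (∀ (V : Type u) [AddCommGroup V] [Module ℝ V]
       (J : Fin 3 → Module.End ℝ V), IsQuatTriple J →
       ∀ S : V →ₗ[ℝ] V →ₗ[ℝ] V,
         (∀ X Y, S X Y = S Y X) →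
         (∀ (a : Fin 3) (X Y : V), S X (J a Y) = J a (S X Y)) →
         S = 0) ∧
    (∀ (E : Type v) [NormedAddCommGroup E] [NormedSpace ℝ E]
       (J : E → Fin 3 → E →L[ℝ] E) (Γ Γ' : E → E →L[ℝ] E →L[ℝ] E) (p : E),
         DifferentiableAt ℝ J p →
         IsQuatTripleCLM (J p) →
         (∀ X Y : E, Γ p X Y = Γ p Y X) →
         (∀ X Y : E, Γ' p X Y = Γ' p Y X) →
         (∀ (a : Fin 3) (X : E),
           covariantDeriv Γ (fun q => J q a) p X = covariantDeriv Γ' (fun q => J q a) p X) →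
         Γ p = Γ' p) :=
  ⟨fun _ _ _ _ hJ _ hS hSJ => hJ.bilinear_eq_zero_of_symm hS hSJ,
    fun _ _ _ _ _ _ _ _ hJ hΓ hΓ' h =>
      hJ.eq_of_symm_of_commute_sub hΓ hΓ' fun a X => covariantDeriv_eq_iff_commute_sub.mp (h a X)⟩

/-- (i) a symmetric bilinear map commuting with a quaternionic triple in its
second slot vanishes; consequently (ii) a torsionless connection making a smooth field of
quaternionic triples covariantly constant is unique. -/
theorem stmt6 :
    (∀ (V : Type) [AddCommGroup V] [Module ℝ V]
       (J : Fin 3 → Module.End ℝ V), IsQuatTriple J →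
       ∀ S : V →ₗ[ℝ] V →ₗ[ℝ] V,
         (∀ X Y, S X Y = S Y X) →
         (∀ (a : Fin 3) (X Y : V), S X (J a Y) = J a (S X Y)) →
         S = 0) ∧
    (∀ (E : Type) [NormedAddCommGroup E] [NormedSpace ℝ E] [FiniteDimensional ℝ E]
       (U : Set E), IsOpen U →
       ∀ (J : E → Fin 3 → E →L[ℝ] E) (Γ Γ' : E → E →L[ℝ] E →L[ℝ] E),
         ContDiffOn ℝ (⊤ : ℕ∞) J U →
         ContDiffOn ℝ (⊤ : ℕ∞) Γ U → ContDiffOn ℝ (⊤ : ℕ∞) Γ' U →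
         (∀ p ∈ U, IsQuatTripleCLM (J p)) →
         (∀ p ∈ U, ∀ X Y : E, Γ p X Y = Γ p Y X) →
         (∀ p ∈ U, ∀ X Y : E, Γ' p X Y = Γ' p Y X) →
         (∀ p ∈ U, ∀ (a : Fin 3) (X : E),
           fderiv ℝ (fun q => J q a) p X
             + (Γ p X).comp (J p a) - (J p a).comp (Γ p X) = 0) →
         (∀ p ∈ U, ∀ (a : Fin 3) (X : E),
           fderiv ℝ (fun q => J q a) p X
             + (Γ' p X).comp (J p a) - (J p a).comp (Γ' p X) = 0) →
         ∀ p ∈ U, Γ p = Γ' p) := by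
  refine ⟨stmt6_general.{0, 0}.1, ?_⟩
  intro E _ _ _ U hU J Γ Γ' hJ_smooth _ _ hJ hΓ hΓ' hpar hpar' p hp
  have hdiff := (hJ_smooth.contDiffAt (hU.mem_nhds hp)).differentiableAt (by simp)
  exact stmt6_general.{0, 0}.2 E J Γ Γ' p hdiff (hJ p hp) (hΓ p hp) (hΓ' p hp)
    fun a X => (hpar p hp a X).trans (hpar' p hp a X).symm
end
end

section
/- (Shift of the moment map under ξ-transformations.) Let V be a real vector space with a quaternionic triple, let ξ ∈ V^* and k ∈ V. Then the endomorphism T of V defined by T(X) = S^ξ(X, k) + Σ_a ξ(J^a k) J^a X commutes with each J^b (b = 1,2,3); equivalently, in the decomposition of X ↦ S^ξ(X,k) into a span{J^1,J^2,J^3}-part plus a part commuting with all J^a, the span{J}-part equals -Σ_a ξ(J^a k) J^a. -/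
noncomputable section

/-- For a linear form `ξ`, the endomorphism `S^ξ(X, ·)`:
`S^ξ(X,Y) = ξ(X)Y + ξ(Y)X - Σ_a ξ(J^a X) J^a Y - Σ_a ξ(J^a Y) J^a X`. -/
def SxiEnd {V : Type*} [AddCommGroup V] [Module ℝ V]
    (J : Fin 3 → Module.End ℝ V) (ξ : V →ₗ[ℝ] ℝ) (X : V) : Module.End ℝ V :=
  ξ X • (1 : Module.End ℝ V) + ξ.smulRight X
    - (∑ a, ξ (J a X) • J a)
    - ∑ a, (ξ ∘ₗ (J a : V →ₗ[ℝ] V)).smulRight (J a X)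

/-!
The terms `Σ_a ξ(J^a k) J^a` cancel, leaving
`T = ξ(k) • 1 + (ξ ⊗ k - Σ_a J^a (ξ ⊗ k) J^a)`. Since `(J^a)⁻¹ = -J^a`, the bracket is, up to a
factor, the average of the rank-one endomorphism `ξ ⊗ k` over conjugation by the quaternion group
`{±1, ±J^1, ±J^2, ±J^3}`, so it commutes with every `J^b`.
-/

theorem eps3_rotate (a b c : Fin 3) : eps3 b c a = eps3 a b c := by
  unfold eps3
  ring

/-- The unnormalised average `A - Σ_a J^a A J^a` of `A` over conjugation by `1` and the `J^a`, used
to produce elements commuting with every `J^a`. The sign stands for `(J^a)⁻¹ = -J^a`, valid for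
quaternionic units; there is no division by the number of terms, so any ring will do. -/
def conjSum {ι R : Type*} [Fintype ι] [Ring R] (J : ι → R) (A : R) : R :=
  A - ∑ a, J a * A * J a

section StructureConstants

variable {ι S R : Type*} [Fintype ι] [DecidableEq ι] [CommSemiring S] [Ring R] [Algebra S R]
  {J : ι → R} {f : ι → ι → ι → S}

theorem mul_conjSum
    (hJ : ∀ a b, J a * J b = -(if a = b then 1 else 0) + ∑ c, f a b c • J c) (A : R) (b : ι) :
    J b * conjSum J A = J b * A + A * J b - ∑ a, ∑ c, f b a c • (J c * A * J a) := by
  have mul_sum_eq :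
      J b * ∑ a, J a * A * J a = -(A * J b) + ∑ a, ∑ c, f b a c • (J c * A * J a) := by
    simp only [Finset.mul_sum, ← mul_assoc, hJ, add_mul, neg_mul, ite_mul, one_mul, zero_mul,
      Finset.sum_mul, smul_mul_assoc, Finset.sum_add_distrib, Finset.sum_neg_distrib,
      Finset.sum_ite_eq, Finset.mem_univ, if_true]
  rw [conjSum, mul_sub, mul_sum_eq]
  abel

theorem conjSum_mul
    (hJ : ∀ a b, J a * J b = -(if a = b then 1 else 0) + ∑ c, f a b c • J c) (A : R) (b : ι) :
    conjSum J A * J b = J b * A + A * J b - ∑ a, ∑ c, f a b c • (J a * A * J c) := by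
  have sum_mul_eq :
      (∑ a, J a * A * J a) * J b = -(J b * A) + ∑ a, ∑ c, f a b c • (J a * A * J c) := by
    simp only [Finset.sum_mul, mul_assoc, hJ, mul_add, mul_neg, mul_ite, mul_one, mul_zero,
      Finset.mul_sum, mul_smul_comm, Finset.sum_add_distrib, Finset.sum_neg_distrib,
      Finset.sum_ite_eq', Finset.mem_univ, if_true]
  rw [conjSum, sub_mul, sum_mul_eq]
  abel

theorem commute_conjSum_of_rotate (hf : ∀ a b c, f b c a = f a b c)
    (hJ : ∀ a b, J a * J b = -(if a = b then 1 else 0) + ∑ c, f a b c • J c) (A : R) (b : ι) :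
    Commute (J b) (conjSum J A) := by
  have sum_eq : ∑ a, ∑ c, f b a c • (J c * A * J a) = ∑ a, ∑ c, f a b c • (J a * A * J c) := by
    rw [Finset.sum_comm]
    exact Finset.sum_congr rfl fun c _ => Finset.sum_congr rfl fun a _ => by rw [hf]
  rw [commute_iff_eq, mul_conjSum hJ, conjSum_mul hJ, sum_eq]

end StructureConstants

section QuatTriple

variable {V : Type*} [AddCommGroup V] [Module ℝ V] {J : Fin 3 → Module.End ℝ V}

theorem IsQuatTriple.commute_conjSum (hJ : IsQuatTriple J) (A : Module.End ℝ V) (b : Fin 3) :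
    Commute (J b) (conjSum J A) :=
  commute_conjSum_of_rotate eps3_rotate hJ A b

theorem SxiEnd_apply_add_sum (J : Fin 3 → Module.End ℝ V) (ξ : V →ₗ[ℝ] ℝ) (k X : V) :
    SxiEnd J ξ X k + ∑ a, ξ (J a k) • J a X
      = (ξ k • (1 : Module.End ℝ V) + conjSum J (ξ.smulRight k)) X := by
  simp only [SxiEnd, conjSum, LinearMap.add_apply, LinearMap.sub_apply, LinearMap.smul_apply,
    LinearMap.sum_apply, LinearMap.smulRight_apply, LinearMap.comp_apply, Module.End.mul_apply,
    Module.End.one_apply, map_smul]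
  abel

end QuatTriple

/-- the map `T : X ↦ S^ξ(X,k) + Σ_a ξ(J^a k) J^a X` is linear and commutes
with each `J^b`. -/
theorem stmt10 {V : Type*} [AddCommGroup V] [Module ℝ V]
    (J : Fin 3 → Module.End ℝ V) (hJ : IsQuatTriple J)
    (ξ : V →ₗ[ℝ] ℝ) (k : V) :
    IsLinearMap ℝ (fun X => SxiEnd J ξ X k + ∑ a, ξ (J a k) • J a X) ∧
    (∀ (b : Fin 3) (X : V),
      (SxiEnd J ξ (J b X) k + ∑ a, ξ (J a k) • J a (J b X))
        = J b (SxiEnd J ξ X k + ∑ a, ξ (J a k) • J a X)) := by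
  let T : Module.End ℝ V := ξ k • 1 + conjSum J (ξ.smulRight k)
  have T_commute (b : Fin 3) : Commute (J b) T :=
    ((Commute.one_right (J b)).smul_right (ξ k)).add_right (hJ.commute_conjSum _ b)
  simp only [SxiEnd_apply_add_sum]
  exact ⟨T.isLinear, fun b X => (LinearMap.congr_fun (T_commute b).eq X).symm⟩
end
end

section
/- (The conformal hypercomplex extension is almost hypercomplex.) With the data and definitions of the hat construction, the endomorphisms Ĵ^1, Ĵ^2, Ĵ^3 of V̂ = ℝ ⊕ ℝ^3 ⊕ W form a quaternionic triple on V̂: Ĵ^a ∘ Ĵ^b = -δ^{ab} id_{V̂} + Σ_c ε^{abc} Ĵ^c for all a,b ∈ {1,2,3}. -/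
noncomputable section

/-- The hat construction: the endomorphisms `Ĵ^a` of `V̂ = ℝ ⊕ ℝ^3 ⊕ W`, given as plain
functions; `k β a` is `k^β{}_a` and `m a β` is `m^a{}_β`. -/
def JhatFun {W : Type*} [AddCommGroup W] [Module ℝ W]
    (J : Fin 3 → Module.End ℝ W) (z0 : ℝ) (k m : Fin 3 → Fin 3 → ℝ)
    (A : Fin 3 → W →ₗ[ℝ] ℝ) (a : Fin 3) :
    ℝ × (Fin 3 → ℝ) × W → ℝ × (Fin 3 → ℝ) × W :=
  fun v =>
    ( -z0 * ((∑ α, m a α * v.2.1 α) + A a v.2.2),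
      fun β => (1/z0) * k β a * v.1
        + (∑ α, (∑ b, ∑ c, eps3 a b c * m b α * k β c) * v.2.1 α)
        + ((∑ b, ∑ c, eps3 a b c * A b v.2.2 * k β c)
            - ∑ b, A b (J a v.2.2) * k β b),
      J a v.2.2 )

/-!
The model is the direct sum of left multiplication by the imaginary units on the quaternions and
the given triple on `W`. The hat construction is this model transported to `V̂` along the change of
frame `(x, y, w) ↦ (z⁰ x, k (y - A w), w)`; its linearity and its quaternion relations are
therefore those of the model.
-/

open scoped Quaternion Matrix

namespace IsQuatTriple

variable {V V' : Type*} [AddCommGroup V] [Module ℝ V] [AddCommGroup V'] [Module ℝ V']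
  {J : Fin 3 → Module.End ℝ V} {J' : Fin 3 → Module.End ℝ V'}

theorem apply_apply (hJ : IsQuatTriple J) (a b : Fin 3) (v : V) :
    J a (J b v) = -(if a = b then (1 : ℝ) else 0) • v + ∑ c, eps3 a b c • J c v := by
  have h := LinearMap.congr_fun (hJ a b) v
  split_ifs at h ⊢ <;> simpa using h

theorem of_algHom {R : Type*} [Ring R] [Algebra ℝ R] {x : Fin 3 → R}
    (hx : ∀ a b, x a * x b = -(if a = b then 1 else 0) + ∑ c, eps3 a b c • x c)
    (f : R →ₐ[ℝ] Module.End ℝ V) : IsQuatTriple fun a => f (x a) := by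
  intro a b
  rw [← map_mul, hx a b]
  simp only [map_add, map_neg, apply_ite f, map_one, map_zero, map_sum, map_smul]

theorem prodMap (hJ : IsQuatTriple J) (hJ' : IsQuatTriple J') :
    IsQuatTriple fun a => (J a).prodMap (J' a) := by
  intro a b
  ext v <;> split_ifs with hab <;>
    simp [hJ.apply_apply, hJ'.apply_apply, hab, Prod.fst_sum, Prod.snd_sum]

end IsQuatTriple

/-- The coordinates of a quaternion: its real part and its three imaginary components. -/
def quatCoords : ℍ[ℝ] ≃ₗ[ℝ] ℝ × (Fin 3 → ℝ) :=
  QuaternionAlgebra.linearEquivTuple (-1) 0 (-1) ≪≫ₗ (Fin.consLinearEquiv ℝ fun _ => ℝ).symm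

theorem quatCoords_apply (q : ℍ[ℝ]) : quatCoords q = (q.re, ![q.imI, q.imJ, q.imK]) :=
  rfl

/-- The imaginary units `i`, `j`, `k` of the quaternions, indexed by `Fin 3`. -/
def imUnit (a : Fin 3) : ℍ[ℝ] :=
  quatCoords.symm (0, Pi.single a 1)

@[simp]
theorem re_imUnit (a : Fin 3) : (imUnit a).re = 0 :=
  rfl

@[simp]
theorem imI_imUnit (a : Fin 3) : (imUnit a).imI = (Pi.single a 1 : Fin 3 → ℝ) 0 :=
  rfl

@[simp]
theorem imJ_imUnit (a : Fin 3) : (imUnit a).imJ = (Pi.single a 1 : Fin 3 → ℝ) 1 :=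
  rfl

@[simp]
theorem imK_imUnit (a : Fin 3) : (imUnit a).imK = (Pi.single a 1 : Fin 3 → ℝ) 2 :=
  rfl

theorem imUnit_mul_imUnit (a b : Fin 3) :
    imUnit a * imUnit b = -(if a = b then 1 else 0) + ∑ c, eps3 a b c • imUnit c := by
  fin_cases a <;> fin_cases b <;> ext <;> simp [eps3, Fin.sum_univ_three] <;> norm_num

/-- Left multiplication by the imaginary units of the quaternions, in the coordinates
`quatCoords`: the model on `ℝ ⊕ ℝ³` of the hat construction. -/
def leftMulTriple (a : Fin 3) : Module.End ℝ (ℝ × (Fin 3 → ℝ)) :=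
  quatCoords.conjAlgEquiv ℝ (Algebra.lmul ℝ ℍ[ℝ] (imUnit a))

theorem isQuatTriple_leftMulTriple : IsQuatTriple leftMulTriple :=
  .of_algHom imUnit_mul_imUnit ((quatCoords.conjAlgEquiv ℝ).toAlgHom.comp (Algebra.lmul ℝ ℍ[ℝ]))

theorem leftMulTriple_apply (a : Fin 3) (u : ℝ × (Fin 3 → ℝ)) :
    leftMulTriple a u = (-u.2 a, Pi.single a u.1 + fun c => ∑ b, eps3 a b c * u.2 b) := by
  obtain ⟨q, rfl⟩ := quatCoords.surjective u
  have hmul : leftMulTriple a (quatCoords q) = quatCoords (imUnit a * q) := by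
    simp [leftMulTriple]
  rw [hmul, quatCoords_apply, quatCoords_apply]
  ext c
  · fin_cases a <;> simp
  · fin_cases a <;> fin_cases c <;> simp [eps3, Fin.sum_univ_three] <;> norm_num

section HatFrame

variable {𝕜 ι W : Type*} [Field 𝕜] [Fintype ι] [DecidableEq ι] [AddCommGroup W] [Module 𝕜 W]
  (z : 𝕜) (hz : z ≠ 0) (k m : Matrix ι ι 𝕜) (hmk : m * k = 1) (A : W →ₗ[𝕜] ι → 𝕜)

/-- The change of frame `(x, y, w) ↦ (z x, k (y - A w), w)` which relates the model to the hat
construction; `m` is the inverse of `k`. -/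
def hatFrame : ((𝕜 × (ι → 𝕜)) × W) ≃ₗ[𝕜] 𝕜 × (ι → 𝕜) × W where
  toFun u := (z * u.1.1, k *ᵥ (u.1.2 - A u.2), u.2)
  invFun v := ((z⁻¹ * v.1, m *ᵥ v.2.1 + A v.2.2), v.2.2)
  map_add' u v := by simp [mul_add, ← Matrix.mulVec_add, add_sub_add_comm]
  map_smul' r u := by simp [mul_left_comm, ← Matrix.mulVec_smul, smul_sub]
  left_inv u := by simp [hz, hmk]
  right_inv v := by simp [hz, mul_eq_one_comm.mp hmk]

theorem hatFrame_apply (u : (𝕜 × (ι → 𝕜)) × W) :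
    hatFrame z hz k m hmk A u = (z * u.1.1, k *ᵥ (u.1.2 - A u.2), u.2) :=
  rfl

end HatFrame

section Hat

variable {W : Type*} [AddCommGroup W] [Module ℝ W] (J : Fin 3 → Module.End ℝ W) {z0 : ℝ}
  (hz0 : z0 ≠ 0) {k m : Matrix (Fin 3) (Fin 3) ℝ} (hmk : m * k = 1) (A : Fin 3 → W →ₗ[ℝ] ℝ)

/-- The hat construction as the transport of the product of `leftMulTriple` and `J` along
`hatFrame`. -/
def hatTriple (a : Fin 3) : Module.End ℝ (ℝ × (Fin 3 → ℝ) × W) :=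
  (hatFrame z0 hz0 k m hmk (LinearMap.pi A)).conjAlgEquiv ℝ ((leftMulTriple a).prodMap (J a))

theorem coe_hatTriple (a : Fin 3) :
    ⇑(hatTriple J hz0 hmk A a) = JhatFun J z0 k m A a := by
  funext ⟨x, y, w⟩
  have hconj : hatTriple J hz0 hmk A a (x, y, w) =
      hatFrame z0 hz0 k m hmk (LinearMap.pi A)
        (leftMulTriple a (z0⁻¹ * x, m *ᵥ y + LinearMap.pi A w), J a w) := rfl
  rw [hconj, leftMulTriple_apply, hatFrame_apply]
  ext β
  · simp only [JhatFun, Pi.add_apply, Matrix.mulVec, dotProduct, LinearMap.pi_apply]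
    ring
  · simp only [JhatFun, Matrix.mulVec_sub, Matrix.mulVec_add, Matrix.mulVec_single]
    simp only [Matrix.mulVec, dotProduct, Pi.add_apply, Pi.sub_apply, Pi.smul_apply,
      Matrix.col_apply, MulOpposite.smul_eq_mul_unop, MulOpposite.unop_op, LinearMap.pi_apply,
      Fin.sum_univ_three]
    ring
  · rfl

variable {J} in
theorem isQuatTriple_hatTriple (hJ : IsQuatTriple J) : IsQuatTriple (hatTriple J hz0 hmk A) :=
  .of_algHom (isQuatTriple_leftMulTriple.prodMap hJ)
    ((hatFrame z0 hz0 k m hmk (LinearMap.pi A)).conjAlgEquiv ℝ).toAlgHom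

end Hat

theorem stmt11_general {W : Type*} [AddCommGroup W] [Module ℝ W]
    (J : Fin 3 → Module.End ℝ W) (hJ : IsQuatTriple J)
    (z0 : ℝ) (hz0 : z0 ≠ 0) (k m : Fin 3 → Fin 3 → ℝ)
    (hmk : ∀ a b, (∑ β, m a β * k β b) = if a = b then 1 else 0)
    (A : Fin 3 → W →ₗ[ℝ] ℝ) :
    (∀ a, IsLinearMap ℝ (JhatFun J z0 k m A a)) ∧
    (∀ (a b : Fin 3) (v : ℝ × (Fin 3 → ℝ) × W),
      JhatFun J z0 k m A a (JhatFun J z0 k m A b v)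
        = -(if a = b then (1 : ℝ) else 0) • v
          + ∑ c, eps3 a b c • JhatFun J z0 k m A c v) := by
  have hmk' : Matrix.of m * Matrix.of k = 1 := by
    ext a b
    simp [Matrix.mul_apply, Matrix.one_apply, hmk]
  have hJhat (a : Fin 3) : JhatFun J z0 k m A a = hatTriple J hz0 hmk' A a :=
    (coe_hatTriple J hz0 hmk' A a).symm
  simp only [hJhat]
  exact ⟨fun a => (hatTriple J hz0 hmk' A a).isLinear,
    (isQuatTriple_hatTriple hz0 hmk' A hJ).apply_apply⟩

/-- the hat construction produces linear endomorphisms `Ĵ^a` of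
`V̂ = ℝ ⊕ ℝ^3 ⊕ W` satisfying the quaternion algebra, i.e. a quaternionic triple. -/
theorem stmt11 {W : Type*} [AddCommGroup W] [Module ℝ W] [FiniteDimensional ℝ W]
    (J : Fin 3 → Module.End ℝ W) (hJ : IsQuatTriple J)
    (z0 : ℝ) (hz0 : z0 ≠ 0) (k m : Fin 3 → Fin 3 → ℝ)
    (hmk : ∀ a b, (∑ β, m a β * k β b) = if a = b then 1 else 0)
    (hkm : ∀ α β, (∑ a, k α a * m a β) = if α = β then 1 else 0)
    (A : Fin 3 → W →ₗ[ℝ] ℝ) :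
    (∀ a, IsLinearMap ℝ (JhatFun J z0 k m A a)) ∧
    (∀ (a b : Fin 3) (v : ℝ × (Fin 3 → ℝ) × W),
      JhatFun J z0 k m A a (JhatFun J z0 k m A b v)
        = -(if a = b then (1 : ℝ) else 0) • v
          + ∑ c, eps3 a b c • JhatFun J z0 k m A c v) :=
  stmt11_general J hJ z0 hz0 k m hmk A
end
end

section
/- (Hermiticity of the conformal hyper-Kähler metric.) With the data and definitions of the hat construction and the metric ĝ built from a symmetric bilinear form h on W, if h is hermitian with respect to the quaternionic triple on W, i.e. h(J^a w, J^a w') = h(w, w') for each a ∈ {1,2,3} and all w,w' ∈ W, then ĝ is hermitian with respect to each Ĵ^a: ĝ(Ĵ^a X̂, Ĵ^a Ŷ) = ĝ(X̂, Ŷ) for each a ∈ {1,2,3} and all X̂, Ŷ ∈ V̂. -/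
noncomputable section

/-- `θ^0` on `V̂ = ℝ ⊕ ℝ^3 ⊕ W`. -/
def theta0 {W : Type*} [AddCommGroup W] [Module ℝ W]
    (v : ℝ × (Fin 3 → ℝ) × W) : ℝ := v.1

/-- `θ^α` on `V̂ = ℝ ⊕ ℝ^3 ⊕ W`: `θ^α(e_β) = δ^α_β`, `θ^α(w) = Σ_a A^a(w) k^α{}_a`. -/
def thetaV {W : Type*} [AddCommGroup W] [Module ℝ W]
    (k : Fin 3 → Fin 3 → ℝ) (A : Fin 3 → W →ₗ[ℝ] ℝ) (α : Fin 3)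
    (v : ℝ × (Fin 3 → ℝ) × W) : ℝ :=
  v.2.1 α + ∑ a, A a v.2.2 * k α a

/-- The metric `ĝ = -(1/z^0) θ^0 ⊗ θ^0 + z^0 h - z^0 Σ_{α,β} (Σ_a m^a{}_α m^a{}_β) θ^α ⊗ θ^β`. -/
def ghat {W : Type*} [AddCommGroup W] [Module ℝ W]
    (z0 : ℝ) (k m : Fin 3 → Fin 3 → ℝ) (A : Fin 3 → W →ₗ[ℝ] ℝ)
    (h : W →ₗ[ℝ] W →ₗ[ℝ] ℝ) (v w : ℝ × (Fin 3 → ℝ) × W) : ℝ :=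
  -(1/z0) * theta0 v * theta0 w + z0 * h v.2.2 w.2.2
    - z0 * ∑ α, ∑ β, (∑ a, m a α * m a β) * thetaV k A α v * thetaV k A β w

open scoped Matrix Quaternion RealInnerProductSpace

/-!
Put `P^b = Σ_α m^b_α θ^α` and collect the forms dual to `ℝ ⊕ ℝ^3` into the quaternion-valued form
`Θ = θ^0 / z^0 + P^1 i + P^2 j + P^3 k`. Then `ĝ(v, w) = z^0 (h(v, w) - ⟪Θ v, Θ w⟫)`, and `Ĵ^a` acts
by left multiplication: `Θ (Ĵ^a v) = i_a Θ v`, where `i_a` is the `a`-th imaginary unit. Since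
the quaternion norm is multiplicative, left multiplication by the unit quaternion `i_a` is an
isometry, so `ĝ` is `Ĵ^a`-invariant as soon as `h` is `J^a`-invariant.
-/

section Quaternion

theorem quaternion_inner_mul_mul_left (u p q : ℍ) : ⟪u * p, u * q⟫ = ‖u‖ ^ 2 * ⟪p, q⟫ := by
  rw [real_inner_eq_norm_add_mul_self_sub_norm_mul_self_sub_norm_mul_self_div_two,
    real_inner_eq_norm_add_mul_self_sub_norm_mul_self_sub_norm_mul_self_div_two p q,
    ← mul_add, norm_mul, norm_mul, norm_mul]
  ring

/-- The quaternion `s + x_0 i + x_1 j + x_2 k` with real part `s` and imaginary part `x`, the latter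
indexed by `Fin 3` so that it can be compared with expressions in `eps3`. -/
def quaternionOfReIm (s : ℝ) (x : Fin 3 → ℝ) : ℍ := ⟨s, x 0, x 1, x 2⟩

theorem inner_quaternionOfReIm (s t : ℝ) (x y : Fin 3 → ℝ) :
    ⟪quaternionOfReIm s x, quaternionOfReIm t y⟫ = s * t + ∑ b, x b * y b := by
  rw [Quaternion.inner_def, Quaternion.re_mul]
  simp only [Quaternion.re_star, Quaternion.imI_star, Quaternion.imJ_star, Quaternion.imK_star]
  simp only [quaternionOfReIm, Fin.sum_univ_three]
  ring

theorem quaternionOfReIm_mul (s t : ℝ) (x y : Fin 3 → ℝ) :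
    quaternionOfReIm s x * quaternionOfReIm t y =
      quaternionOfReIm (s * t - x ⬝ᵥ y) (s • y + t • x + x ⨯₃ y) := by
  ext <;>
    simp only [Quaternion.re_mul, Quaternion.imI_mul, Quaternion.imJ_mul, Quaternion.imK_mul] <;>
    simp only [quaternionOfReIm, cross_apply, Matrix.vec3_dotProduct, Pi.add_apply, Pi.smul_apply,
      smul_eq_mul, Matrix.cons_val] <;>
    ring

theorem cross_apply_eq_sum_eps3 (x y : Fin 3 → ℝ) (c : Fin 3) :
    (x ⨯₃ y) c = ∑ a, ∑ b, eps3 a b c * x a * y b := by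
  fin_cases c <;>
    norm_num [cross_apply, eps3, Fin.sum_univ_three, sub_eq_add_neg, add_comm]

/-- The `a`-th imaginary unit: `i`, `j`, `k` for `a = 0, 1, 2`. -/
def imaginaryUnit (a : Fin 3) : ℍ := quaternionOfReIm 0 (Pi.single a 1)

theorem norm_imaginaryUnit (a : Fin 3) : ‖imaginaryUnit a‖ = 1 := by
  rw [norm_eq_sqrt_real_inner, imaginaryUnit, inner_quaternionOfReIm]
  simp [Pi.single_apply]

theorem imaginaryUnit_mul_quaternionOfReIm (a : Fin 3) (s : ℝ) (x : Fin 3 → ℝ) :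
    imaginaryUnit a * quaternionOfReIm s x =
      quaternionOfReIm (-x a) fun c => (if a = c then s else 0) + ∑ b, eps3 a b c * x b := by
  rw [imaginaryUnit, quaternionOfReIm_mul, zero_mul, single_one_dotProduct, zero_sub, zero_smul,
    zero_add]
  congr 1
  funext c
  simp [cross_apply_eq_sum_eps3, Pi.single_apply, eq_comm]

end Quaternion

theorem sum_mul_sum_mul_of_leftInverse {ι κ R : Type*} [Fintype ι] [DecidableEq ι] [Fintype κ]
    [Semiring R] {m : ι → κ → R} {k : κ → ι → R}
    (hmk : ∀ a b, ∑ β, m a β * k β b = if a = b then 1 else 0) (f : ι → R) (a : ι) :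
    ∑ β, m a β * ∑ b, k β b * f b = f a := by
  have hmul : Matrix.of m * Matrix.of k = 1 :=
    Matrix.ext fun a b => by rw [Matrix.one_apply, ← hmk a b]; rfl
  have hmulVec : Matrix.of m *ᵥ (Matrix.of k *ᵥ f) = f := by
    rw [Matrix.mulVec_mulVec, hmul, Matrix.one_mulVec]
  exact congrFun hmulVec a

theorem sum_sum_gram_mul_mul {ι κ R : Type*} [Fintype ι] [Fintype κ] [CommSemiring R]
    (m : ι → κ → R) (x y : κ → R) :
    ∑ α, ∑ β, (∑ a, m a α * m a β) * x α * y β = ∑ a, (∑ α, m a α * x α) * ∑ β, m a β * y β := by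
  simp only [Finset.sum_mul_sum]
  simp only [Finset.sum_mul]
  rw [Finset.sum_comm_cycle]
  simp only [mul_assoc, mul_left_comm (x _)]

section Hat

variable {W : Type*} [AddCommGroup W] [Module ℝ W]

/-- The form `P^b = Σ_α m^b_α θ^α` on `V̂`, written out as `P^b(x, w) = Σ_α m^b_α x^α + A^b(w)`
for `x ∈ ℝ^3`, `w ∈ W`. The forms `P^b` diagonalize the `θ^α ⊗ θ^β` part of `ĝ`. -/
def thetaFrame (m : Fin 3 → Fin 3 → ℝ) (A : Fin 3 → W →ₗ[ℝ] ℝ) (v : ℝ × (Fin 3 → ℝ) × W)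
    (b : Fin 3) : ℝ :=
  ∑ α, m b α * v.2.1 α + A b v.2.2

/-- The quaternion-valued form `Θ = θ^0 / z^0 + P^1 i + P^2 j + P^3 k` on `V̂`, which turns `Ĵ^a`
into left multiplication by an imaginary unit. -/
def thetaQuaternion (z0 : ℝ) (m : Fin 3 → Fin 3 → ℝ) (A : Fin 3 → W →ₗ[ℝ] ℝ)
    (v : ℝ × (Fin 3 → ℝ) × W) : ℍ :=
  quaternionOfReIm (theta0 v / z0) (thetaFrame m A v)

variable {k m : Fin 3 → Fin 3 → ℝ}

theorem sum_mul_thetaV (hmk : ∀ a b, ∑ β, m a β * k β b = if a = b then 1 else 0)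
    (A : Fin 3 → W →ₗ[ℝ] ℝ) (v : ℝ × (Fin 3 → ℝ) × W) (b : Fin 3) :
    ∑ α, m b α * thetaV k A α v = thetaFrame m A v b := by
  simp only [thetaV, thetaFrame, mul_add, Finset.sum_add_distrib, mul_comm (A _ _),
    sum_mul_sum_mul_of_leftInverse hmk]

theorem ghat_eq_sub_inner (hmk : ∀ a b, ∑ β, m a β * k β b = if a = b then 1 else 0)
    {z0 : ℝ} (hz0 : z0 ≠ 0) (A : Fin 3 → W →ₗ[ℝ] ℝ) (h : W →ₗ[ℝ] W →ₗ[ℝ] ℝ)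
    (v w : ℝ × (Fin 3 → ℝ) × W) :
    ghat z0 k m A h v w =
      z0 * (h v.2.2 w.2.2 - ⟪thetaQuaternion z0 m A v, thetaQuaternion z0 m A w⟫) := by
  simp only [ghat, sum_sum_gram_mul_mul, sum_mul_thetaV hmk, thetaQuaternion,
    inner_quaternionOfReIm]
  field_simp
  ring

theorem theta0_JhatFun (J : Fin 3 → Module.End ℝ W) (z0 : ℝ) (k m : Fin 3 → Fin 3 → ℝ)
    (A : Fin 3 → W →ₗ[ℝ] ℝ) (a : Fin 3) (v : ℝ × (Fin 3 → ℝ) × W) :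
    theta0 (JhatFun J z0 k m A a v) = -z0 * thetaFrame m A v a :=
  rfl

theorem thetaV_JhatFun (J : Fin 3 → Module.End ℝ W) (z0 : ℝ) (k m : Fin 3 → Fin 3 → ℝ)
    (A : Fin 3 → W →ₗ[ℝ] ℝ) (a β : Fin 3) (v : ℝ × (Fin 3 → ℝ) × W) :
    thetaV k A β (JhatFun J z0 k m A a v) =
      ∑ c, k β c *
        ((if a = c then theta0 v / z0 else 0) + ∑ b, eps3 a b c * thetaFrame m A v b) := by
  have hdiag : ∑ c, k β c * (if a = c then theta0 v / z0 else 0) = 1 / z0 * k β a * v.1 := by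
    simp only [mul_ite, mul_zero, Finset.sum_ite_eq, Finset.mem_univ, if_true, theta0]
    ring
  have hcross : ∑ c, k β c * ∑ b, eps3 a b c * thetaFrame m A v b =
      (∑ α, (∑ b, ∑ c, eps3 a b c * m b α * k β c) * v.2.1 α) +
        ∑ b, ∑ c, eps3 a b c * A b v.2.2 * k β c := by
    simp only [thetaFrame, Fin.sum_univ_three]
    ring
  simp only [mul_add, Finset.sum_add_distrib, hdiag, hcross]
  rw [thetaV, JhatFun, add_assoc, add_assoc, sub_add_cancel]

theorem thetaFrame_JhatFun (hmk : ∀ a b, ∑ β, m a β * k β b = if a = b then 1 else 0)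
    (J : Fin 3 → Module.End ℝ W) (z0 : ℝ) (A : Fin 3 → W →ₗ[ℝ] ℝ) (a : Fin 3)
    (v : ℝ × (Fin 3 → ℝ) × W) :
    thetaFrame m A (JhatFun J z0 k m A a v) = fun c =>
      (if a = c then theta0 v / z0 else 0) + ∑ b, eps3 a b c * thetaFrame m A v b := by
  funext c
  simp only [← sum_mul_thetaV hmk _ (JhatFun J z0 k m A a v), thetaV_JhatFun,
    sum_mul_sum_mul_of_leftInverse hmk]

theorem thetaQuaternion_JhatFun (hmk : ∀ a b, ∑ β, m a β * k β b = if a = b then 1 else 0)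
    (J : Fin 3 → Module.End ℝ W) {z0 : ℝ} (hz0 : z0 ≠ 0) (A : Fin 3 → W →ₗ[ℝ] ℝ) (a : Fin 3)
    (v : ℝ × (Fin 3 → ℝ) × W) :
    thetaQuaternion z0 m A (JhatFun J z0 k m A a v) =
      imaginaryUnit a * thetaQuaternion z0 m A v := by
  have hre : theta0 (JhatFun J z0 k m A a v) / z0 = -thetaFrame m A v a := by
    rw [theta0_JhatFun, neg_mul, neg_div, mul_div_cancel_left₀ _ hz0]
  rw [thetaQuaternion, thetaQuaternion, imaginaryUnit_mul_quaternionOfReIm, hre,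
    thetaFrame_JhatFun hmk]

theorem inner_thetaQuaternion_JhatFun
    (hmk : ∀ a b, ∑ β, m a β * k β b = if a = b then 1 else 0)
    (J : Fin 3 → Module.End ℝ W) {z0 : ℝ} (hz0 : z0 ≠ 0) (A : Fin 3 → W →ₗ[ℝ] ℝ) (a : Fin 3)
    (v w : ℝ × (Fin 3 → ℝ) × W) :
    ⟪thetaQuaternion z0 m A (JhatFun J z0 k m A a v),
        thetaQuaternion z0 m A (JhatFun J z0 k m A a w)⟫ =
      ⟪thetaQuaternion z0 m A v, thetaQuaternion z0 m A w⟫ := by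
  rw [thetaQuaternion_JhatFun hmk J hz0, thetaQuaternion_JhatFun hmk J hz0,
    quaternion_inner_mul_mul_left, norm_imaginaryUnit, one_pow, one_mul]

theorem stmt12_general (J : Fin 3 → Module.End ℝ W) {z0 : ℝ} (hz0 : z0 ≠ 0)
    (hmk : ∀ a b, ∑ β, m a β * k β b = if a = b then 1 else 0)
    (A : Fin 3 → W →ₗ[ℝ] ℝ) (h : W →ₗ[ℝ] W →ₗ[ℝ] ℝ) (a : Fin 3)
    (hherm : ∀ w w', h (J a w) (J a w') = h w w') (v w : ℝ × (Fin 3 → ℝ) × W) :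
    ghat z0 k m A h (JhatFun J z0 k m A a v) (JhatFun J z0 k m A a w) = ghat z0 k m A h v w := by
  have hW : h (JhatFun J z0 k m A a v).2.2 (JhatFun J z0 k m A a w).2.2 = h v.2.2 w.2.2 :=
    hherm v.2.2 w.2.2
  rw [ghat_eq_sub_inner hmk hz0, ghat_eq_sub_inner hmk hz0, hW,
    inner_thetaQuaternion_JhatFun hmk J hz0]

end Hat

/-- if `h` is hermitian with respect to the quaternionic triple on `W`, then
the metric `ĝ` of the hat construction is hermitian with respect to each `Ĵ^a`. -/
theorem stmt12 {W : Type*} [AddCommGroup W] [Module ℝ W] [FiniteDimensional ℝ W]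
    (J : Fin 3 → Module.End ℝ W) (hJ : IsQuatTriple J)
    (z0 : ℝ) (hz0 : z0 ≠ 0) (k m : Fin 3 → Fin 3 → ℝ)
    (hmk : ∀ a b, (∑ β, m a β * k β b) = if a = b then 1 else 0)
    (hkm : ∀ α β, (∑ a, k α a * m a β) = if α = β then 1 else 0)
    (A : Fin 3 → W →ₗ[ℝ] ℝ)
    (h : W →ₗ[ℝ] W →ₗ[ℝ] ℝ) (hsymm : ∀ w w', h w w' = h w' w)
    (hherm : ∀ (a : Fin 3) (w w' : W), h (J a w) (J a w') = h w w') :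
    ∀ (a : Fin 3) (v w : ℝ × (Fin 3 → ℝ) × W),
      ghat z0 k m A h (JhatFun J z0 k m A a v) (JhatFun J z0 k m A a w)
        = ghat z0 k m A h v w :=
  fun a => stmt12_general J hz0 hmk A h a (hherm a)
end
end

section
/- (Signature of the conformal hyper-Kähler metric.) With the data and definitions of the hat construction and the metric ĝ built from h, suppose in addition that z^0 > 0, dim_ℝ W = 4n, and h is positive definite on W. Then V̂ admits a ĝ-orthogonal direct sum decomposition V̂ = V_- ⊕ V_+ with dim V_- = 4 and dim V_+ = 4n, such that ĝ is negative definite on V_- and positive definite on V_+; in particular ĝ is a nondegenerate symmetric bilinear form of signature (4, 4n). -/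
noncomputable section

/-!
The coframe `v ↦ ((θ^0 v, (θ^α v)_α), w)`, with `w` the `W`-component of `v`, is a linear
isomorphism of `V̂` onto `(ℝ × ℝ^3) × W`: it shears the `ℝ^3`-summand by a linear map of `w`. It
turns `ĝ` into the orthogonal sum of `-b` and `z^0 h`, where `b(t, u) = t² / z^0 + z^0 |m u|²` is
positive definite because `m` is injective. Hence the preimages of the two factors are the required
summands: the negative one is `ℝ ⊕ ℝ^3`, the positive one is the common kernel of `θ^0` and the
`θ^α`, a graph over `W`.
-/

section DefiniteSplitting

open LinearMap (BilinForm)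

variable {R U V V' W : Type*} [CommRing R]
  [AddCommGroup U] [Module R U] [AddCommGroup V] [Module R V]
  [AddCommGroup V'] [Module R V'] [AddCommGroup W] [Module R W]

/-- The orthogonal direct sum of two bilinear forms; for quadratic forms this is
`QuadraticMap.prod`. -/
def orthogonalSum (b : BilinForm R U) (c : BilinForm R W) : BilinForm R (U × W) :=
  b.compl₁₂ (.fst R U W) (.fst R U W) + c.compl₁₂ (.snd R U W) (.snd R U W)

@[simp]
theorem orthogonalSum_apply (b : BilinForm R U) (c : BilinForm R W) (x y : U × W) :
    orthogonalSum b c x y = b x.1 y.1 + c x.2 y.2 :=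
  rfl

variable [PartialOrder R]

/-- A decomposition `V = N ⊕ P` exhibiting the signature of the bilinear form `B`. As `B` need not
be symmetric, orthogonality is one-sided: `B` vanishes on `N × P`. -/
structure IsDefiniteSplitting (B : BilinForm R V) (N P : Submodule R V) : Prop where
  isCompl : IsCompl N P
  isOrtho : ∀ x ∈ N, ∀ y ∈ P, B x y = 0
  neg : ∀ x ∈ N, x ≠ 0 → B x x < 0
  pos : ∀ x ∈ P, x ≠ 0 → 0 < B x x

theorem IsDefiniteSplitting.separatingLeft {B : BilinForm R V} {N P : Submodule R V}
    (hB : IsDefiniteSplitting B N P) : B.SeparatingLeft := by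
  intro x hx
  obtain ⟨y, hy, z, hz, rfl⟩ : ∃ y ∈ N, ∃ z ∈ P, y + z = x :=
    Submodule.mem_sup.mp (hB.isCompl.sup_eq_top ▸ Submodule.mem_top)
  have hz0 : z = 0 := by
    by_contra hne
    have hBz : B z z = 0 := by simpa [hB.isOrtho y hy z hz] using hx z
    exact (hB.pos z hz hne).ne' hBz
  have hy0 : y = 0 := by
    by_contra hne
    have hBy : B y y = 0 := by simpa [hz0] using hx y
    exact (hB.neg y hy hne).ne hBy
  rw [hy0, hz0, add_zero]

theorem IsDefiniteSplitting.comap {B : BilinForm R V} {N P : Submodule R V}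
    (hB : IsDefiniteSplitting B N P) (e : V' ≃ₗ[R] V) :
    IsDefiniteSplitting (B.compl₁₂ e.toLinearMap e.toLinearMap)
      (N.comap e.toLinearMap) (P.comap e.toLinearMap) where
  isCompl := (Submodule.orderIsoMapComap e).symm.isCompl hB.isCompl
  isOrtho x hx y hy := hB.isOrtho (e x) hx (e y) hy
  neg x hx hne := hB.neg (e x) hx (e.map_ne_zero_iff.mpr hne)
  pos x hx hne := hB.pos (e x) hx (e.map_ne_zero_iff.mpr hne)

variable [IsOrderedAddMonoid R]

theorem orthogonalSum_posDef {b : BilinForm R U} {c : BilinForm R W}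
    (hb : b.toQuadraticMap.PosDef) (hc : c.toQuadraticMap.PosDef) :
    (orthogonalSum b c).toQuadraticMap.PosDef :=
  hb.prod hc

theorem isDefiniteSplitting_orthogonalSum_neg {b : BilinForm R U} {c : BilinForm R W}
    (hb : b.toQuadraticMap.PosDef) (hc : c.toQuadraticMap.PosDef) :
    IsDefiniteSplitting (orthogonalSum (-b) c)
      (LinearMap.range (.inl R U W)) (LinearMap.range (.inr R U W)) where
  isCompl := LinearMap.isCompl_range_inl_inr
  isOrtho := by
    rintro _ ⟨u, rfl⟩ _ ⟨w, rfl⟩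
    simp
  neg := by
    rintro _ ⟨u, rfl⟩ hne
    simpa using hb u (by rintro rfl; exact hne (map_zero _))
  pos := by
    rintro _ ⟨w, rfl⟩ hne
    simpa using hc w (by rintro rfl; exact hne (map_zero _))

end DefiniteSplitting

section Gram

open Matrix

variable {ι κ R : Type*} [Fintype ι] [Fintype κ] [DecidableEq κ]
  [CommRing R] [LinearOrder R] [IsStrictOrderedRing R]

theorem toBilin'_transpose_mul_self_posDef {M : Matrix ι κ R}
    (hM : Function.Injective M.mulVec) : (toBilin' (Mᵀ * M)).toQuadraticMap.PosDef := by
  intro x hx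
  have hMx : M *ᵥ x ≠ 0 := fun h ↦ hx (hM (h.trans (mulVec_zero M).symm))
  calc
    0 < (M *ᵥ x) ⬝ᵥ (M *ᵥ x) :=
      (Fintype.sum_nonneg fun _ ↦ mul_self_nonneg _).lt_of_ne'
        (dotProduct_self_eq_zero.not.mpr hMx)
    _ = toBilin' (Mᵀ * M) x x := by
      rw [toBilin'_apply', ← mulVec_mulVec, dotProduct_mulVec x Mᵀ, vecMul_transpose]

end Gram

section HatConstruction

variable {W : Type*} [AddCommGroup W] [Module ℝ W]

/-- The coframe of the hat construction: `θ^0`, the `θ^α`, and the projection to `W`, gathered into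
an isomorphism. -/
def coframe (k : Fin 3 → Fin 3 → ℝ) (A : Fin 3 → W →ₗ[ℝ] ℝ) :
    (ℝ × (Fin 3 → ℝ) × W) ≃ₗ[ℝ] (ℝ × (Fin 3 → ℝ)) × W where
  toFun v := ((theta0 v, fun α ↦ thetaV k A α v), v.2.2)
  map_add' v w := by
    ext <;> simp [theta0, thetaV, add_mul, Finset.sum_add_distrib, add_add_add_comm]
  map_smul' c v := by
    ext <;> simp [theta0, thetaV, mul_add, Finset.mul_sum, mul_assoc]
  invFun p := (p.1.1, fun α ↦ p.1.2 α - ∑ a, A a p.2 * k α a, p.2)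
  left_inv v := by simp [theta0, thetaV]
  right_inv p := by simp [theta0, thetaV]

@[simp]
theorem coframe_apply (k : Fin 3 → Fin 3 → ℝ) (A : Fin 3 → W →ₗ[ℝ] ℝ)
    (v : ℝ × (Fin 3 → ℝ) × W) :
    coframe k A v = ((theta0 v, fun α ↦ thetaV k A α v), v.2.2) :=
  rfl

/-- The form `b((t, u), (t', u')) = t t' / z^0 + z^0 ⟨m u, m u'⟩` on `ℝ ⊕ ℝ^3`, which is the
restriction of `-ĝ`. -/
def fiberForm (z0 : ℝ) (m : Matrix (Fin 3) (Fin 3) ℝ) :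
    LinearMap.BilinForm ℝ (ℝ × (Fin 3 → ℝ)) :=
  orthogonalSum ((1 / z0) • LinearMap.mul ℝ ℝ) (z0 • Matrix.toBilin' (m.transpose * m))

theorem fiberForm_posDef {z0 : ℝ} (hz0 : 0 < z0) {m : Matrix (Fin 3) (Fin 3) ℝ}
    (hm : Function.Injective m.mulVec) : (fiberForm z0 m).toQuadraticMap.PosDef := by
  have hmul : (LinearMap.BilinMap.toQuadraticMap (LinearMap.mul ℝ ℝ)).PosDef :=
    fun _ ht ↦ mul_self_pos.mpr ht
  exact orthogonalSum_posDef (hmul.smul (one_div_pos.mpr hz0))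
    ((toBilin'_transpose_mul_self_posDef hm).smul hz0)

/-- The metric `ĝ` as a bilinear form, written as an orthogonal sum in the coframe. -/
def ghatForm (z0 : ℝ) (k m : Fin 3 → Fin 3 → ℝ) (A : Fin 3 → W →ₗ[ℝ] ℝ)
    (h : LinearMap.BilinForm ℝ W) : LinearMap.BilinForm ℝ (ℝ × (Fin 3 → ℝ) × W) :=
  (orthogonalSum (-fiberForm z0 (.of m)) (z0 • h)).compl₁₂
    (coframe k A).toLinearMap (coframe k A).toLinearMap

theorem ghatForm_apply (z0 : ℝ) (k m : Fin 3 → Fin 3 → ℝ) (A : Fin 3 → W →ₗ[ℝ] ℝ)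
    (h : LinearMap.BilinForm ℝ W) (v w : ℝ × (Fin 3 → ℝ) × W) :
    ghatForm z0 k m A h v w = ghat z0 k m A h v w := by
  have hgram : Matrix.toBilin' ((Matrix.of m).transpose * Matrix.of m)
      (fun α ↦ thetaV k A α v) (fun α ↦ thetaV k A α w) =
        ∑ α, ∑ β, (∑ a, m a α * m a β) * thetaV k A α v * thetaV k A β w := by
    simp [Matrix.toBilin'_apply, Matrix.mul_apply, mul_comm (thetaV k A _ v)]
  simp only [ghatForm, fiberForm, ghat, ← hgram, LinearMap.compl₁₂_apply, orthogonalSum_apply,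
    LinearMap.neg_apply, LinearMap.smul_apply, LinearMap.mul_apply', LinearEquiv.coe_coe,
    coframe_apply, smul_eq_mul]
  ring

theorem isDefiniteSplitting_ghatForm {z0 : ℝ} (hz0 : 0 < z0) (k : Fin 3 → Fin 3 → ℝ)
    {m : Fin 3 → Fin 3 → ℝ} (hm : Function.Injective (Matrix.of m).mulVec)
    (A : Fin 3 → W →ₗ[ℝ] ℝ) {h : LinearMap.BilinForm ℝ W} (hpos : h.toQuadraticMap.PosDef) :
    IsDefiniteSplitting (ghatForm z0 k m A h)
      ((LinearMap.range (.inl ℝ (ℝ × (Fin 3 → ℝ)) W)).comap (coframe k A).toLinearMap)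
      ((LinearMap.range (.inr ℝ (ℝ × (Fin 3 → ℝ)) W)).comap (coframe k A).toLinearMap) := by
  have hzh : (z0 • h).toQuadraticMap.PosDef := hpos.smul hz0
  exact (isDefiniteSplitting_orthogonalSum_neg (fiberForm_posDef hz0 hm) hzh).comap (coframe k A)

theorem stmt13_general (z0 : ℝ) (hz0 : 0 < z0) (k m : Fin 3 → Fin 3 → ℝ)
    (hkm : ∀ α β, (∑ a, k α a * m a β) = if α = β then 1 else 0)
    (A : Fin 3 → W →ₗ[ℝ] ℝ)
    (h : LinearMap.BilinForm ℝ W) (hpos : ∀ w : W, w ≠ 0 → 0 < h w w) :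
    ∃ Vneg Vpos : Submodule ℝ (ℝ × (Fin 3 → ℝ) × W),
      IsCompl Vneg Vpos ∧
      (∀ x ∈ Vneg, ∀ y ∈ Vpos, ghat z0 k m A h x y = 0) ∧
      Module.finrank ℝ Vneg = 4 ∧
      Nonempty (Vpos ≃ₗ[ℝ] W) ∧
      (∀ x ∈ Vneg, x ≠ 0 → ghat z0 k m A h x x < 0) ∧
      (∀ x ∈ Vpos, x ≠ 0 → 0 < ghat z0 k m A h x x) ∧
      (∀ x : ℝ × (Fin 3 → ℝ) × W, (∀ y, ghat z0 k m A h x y = 0) → x = 0) := by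
  have hkm_one : Matrix.of k * Matrix.of m = 1 := by
    ext α β
    simp [Matrix.mul_apply, Matrix.one_apply, hkm]
  have hm : Function.Injective (Matrix.of m).mulVec :=
    Function.LeftInverse.injective (g := (Matrix.of k).mulVec) fun u ↦ by
      rw [Matrix.mulVec_mulVec, hkm_one, Matrix.one_mulVec]
  have hsplit := isDefiniteSplitting_ghatForm hz0 k hm A hpos
  have eNeg := ((coframe k A).ofSubmodule' _).trans
    (LinearEquiv.ofInjective _ LinearMap.inl_injective).symm
  have ePos := ((coframe k A).ofSubmodule' _).trans
    (LinearEquiv.ofInjective _ LinearMap.inr_injective).symm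
  simp only [← ghatForm_apply]
  exact ⟨_, _, hsplit.isCompl, hsplit.isOrtho, eNeg.finrank_eq.trans (by simp), ⟨ePos⟩,
    hsplit.neg, hsplit.pos, hsplit.separatingLeft⟩

end HatConstruction

/-- for `z^0 > 0`, `dim W = 4n` and `h` positive definite, the metric `ĝ` of
the hat construction has signature `(4, 4n)`: `V̂` splits `ĝ`-orthogonally into a
4-dimensional negative-definite and a `4n`-dimensional positive-definite summand, and `ĝ`
is nondegenerate. -/
theorem stmt13 {W : Type*} [AddCommGroup W] [Module ℝ W] [FiniteDimensional ℝ W]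
    (n : ℕ) (hdim : Module.finrank ℝ W = 4 * n)
    (z0 : ℝ) (hz0 : 0 < z0) (k m : Fin 3 → Fin 3 → ℝ)
    (hmk : ∀ a b, (∑ β, m a β * k β b) = if a = b then 1 else 0)
    (hkm : ∀ α β, (∑ a, k α a * m a β) = if α = β then 1 else 0)
    (A : Fin 3 → W →ₗ[ℝ] ℝ)
    (h : W →ₗ[ℝ] W →ₗ[ℝ] ℝ) (hsymm : ∀ w w', h w w' = h w' w)
    (hpos : ∀ w : W, w ≠ 0 → 0 < h w w) :
    ∃ Vneg Vpos : Submodule ℝ (ℝ × (Fin 3 → ℝ) × W),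
      IsCompl Vneg Vpos ∧
      (∀ x ∈ Vneg, ∀ y ∈ Vpos, ghat z0 k m A h x y = 0) ∧
      Module.finrank ℝ Vneg = 4 ∧
      Module.finrank ℝ Vpos = 4 * n ∧
      (∀ x ∈ Vneg, x ≠ 0 → ghat z0 k m A h x x < 0) ∧
      (∀ x ∈ Vpos, x ≠ 0 → 0 < ghat z0 k m A h x x) ∧
      (∀ x : ℝ × (Fin 3 → ℝ) × W, (∀ y, ghat z0 k m A h x y = 0) → x = 0) := by
  obtain ⟨Vneg, Vpos, hcompl, hortho, hneg, ⟨e⟩, hdef⟩ := stmt13_general z0 hz0 k m hkm A h hpos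
  exact ⟨Vneg, Vpos, hcompl, hortho, hneg, e.finrank_eq.trans hdim, hdef⟩
end
end
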